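/- arXiv:1408.6552 — 8 statements merged into one kernel-verified Lean document; each statement's English description precedes it below -/
import Mathlib

section
/- A framework G(p) in ℝ^d (with all points pairwise distinct) is globally bearing rigid if and only if Null(R^κ(p)) = Null(R(p)), or equivalently rank(R^κ(p)) = rank(R(p)). -/
/-- `projL x` is the orthogonal projection matrix
`P_x = I - (x/‖x‖)(x/‖x‖)ᵀ`, i.e. `projL x y = y - ⟪x,y⟫/‖x‖² • x`. -/
noncomputable def projL {d : ℕ} (x : EuclideanSpace ℝ (Fin d)) :
    EuclideanSpace ℝ (Fin d) →ₗ[ℝ] EuclideanSpace ℝ (Fin d) :=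
  LinearMap.id - (‖x‖ ^ 2)⁻¹ •
    (LinearMap.toSpanSingleton ℝ (EuclideanSpace ℝ (Fin d)) x ∘ₗ (innerSL ℝ x).toLinearMap)

/-- The bearing rigidity matrix `R(p) = diag(P_{g_k}/‖e_k‖)(H ⊗ I_d)` of the framework
whose `k`-th oriented edge goes from vertex `(E k).1` to vertex `(E k).2`
(so `e_k = p_{(E k).2} - p_{(E k).1}` and `g_k = e_k/‖e_k‖`), viewed as a linear map
`ℝ^{dn} → ℝ^{dm}`. -/
noncomputable def bearingMap {d n : ℕ} {ι : Type*} (E : ι → Fin n × Fin n)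
    (p : Fin n → EuclideanSpace ℝ (Fin d)) :
    (Fin n → EuclideanSpace ℝ (Fin d)) →ₗ[ℝ] (ι → EuclideanSpace ℝ (Fin d)) :=
  LinearMap.pi fun k =>
    (‖p (E k).2 - p (E k).1‖⁻¹ • projL (p (E k).2 - p (E k).1)) ∘ₗ
      ((LinearMap.proj (R := ℝ) (φ := fun _ : Fin n => EuclideanSpace ℝ (Fin d)) (E k).2) -
       (LinearMap.proj (R := ℝ) (φ := fun _ : Fin n => EuclideanSpace ℝ (Fin d)) (E k).1))

theorem mem_ker_bearingMap {d n : ℕ} {ι : Type*} (E : ι → Fin n × Fin n)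
    (p : Fin n → EuclideanSpace ℝ (Fin d))
    (hp : ∀ i j : Fin n, i ≠ j → p i ≠ p j) (q : Fin n → EuclideanSpace ℝ (Fin d)) :
    q ∈ LinearMap.ker (bearingMap E p) ↔
      ∀ k, projL (p (E k).2 - p (E k).1) (q (E k).2 - q (E k).1) = 0 := by
  rw [LinearMap.mem_ker, funext_iff]
  refine forall_congr' fun k => ?_
  change ‖p (E k).2 - p (E k).1‖⁻¹ •
    projL (p (E k).2 - p (E k).1) (q (E k).2 - q (E k).1) = 0 ↔ _
  by_cases h : (E k).2 = (E k).1
  · simp [h]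
  · have h1 : ‖p (E k).2 - p (E k).1‖⁻¹ ≠ 0 :=
      inv_ne_zero (norm_ne_zero_iff.mpr (sub_ne_zero.mpr (hp _ _ h)))
    rw [smul_eq_zero]
    simp only [h1, false_or]

/-- A framework `G(p)` in `ℝ^d` (pairwise distinct points) is globally
bearing rigid iff `Null(R^κ(p)) = Null(R(p))`, or equivalently
`rank R^κ(p) = rank R(p)`. -/
theorem globally_bearing_rigid_iff {d n m : ℕ} (hd : 2 ≤ d) (hn : 2 ≤ n)
    (E : Fin m → Fin n × Fin n) (hE : ∀ k, (E k).1 ≠ (E k).2)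
    (p : Fin n → EuclideanSpace ℝ (Fin d))
    (hp : ∀ i j : Fin n, i ≠ j → p i ≠ p j) :
    ((∀ p' : Fin n → EuclideanSpace ℝ (Fin d),
        (∀ k, projL (p (E k).2 - p (E k).1) (p' (E k).2 - p' (E k).1) = 0) →
        ∀ i j : Fin n, i ≠ j → projL (p i - p j) (p' i - p' j) = 0) ↔
      LinearMap.ker (bearingMap (id : Fin n × Fin n → Fin n × Fin n) p) =
        LinearMap.ker (bearingMap E p)) ∧
    (LinearMap.ker (bearingMap (id : Fin n × Fin n → Fin n × Fin n) p) =
        LinearMap.ker (bearingMap E p) ↔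
      Module.finrank ℝ
          (LinearMap.range (bearingMap (id : Fin n × Fin n → Fin n × Fin n) p)) =
        Module.finrank ℝ (LinearMap.range (bearingMap E p))) := by
  have hle : LinearMap.ker (bearingMap (id : Fin n × Fin n → Fin n × Fin n) p) ≤
      LinearMap.ker (bearingMap E p) := by
    intro q hq
    rw [mem_ker_bearingMap _ _ hp] at hq ⊢
    exact fun k => hq (E k)
  refine ⟨⟨fun h => le_antisymm hle ?_, fun h p' hp' i j _ => ?_⟩, ⟨fun h => ?_, fun h => ?_⟩⟩
  · intro q hq
    rw [mem_ker_bearingMap _ _ hp] at hq ⊢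
    rintro ⟨i, j⟩
    by_cases hij : j = i
    · simp [hij]
    · exact h q hq j i hij
  · have h1 := (mem_ker_bearingMap E p hp p').mpr hp'
    rw [← h, mem_ker_bearingMap _ _ hp] at h1
    exact h1 (j, i)
  · have h1 := LinearMap.finrank_range_add_finrank_ker (bearingMap E p)
    have h2 := LinearMap.finrank_range_add_finrank_ker
      (bearingMap (id : Fin n × Fin n → Fin n × Fin n) p)
    rw [h] at h2
    omega
  · have h1 := LinearMap.finrank_range_add_finrank_ker (bearingMap E p)
    have h2 := LinearMap.finrank_range_add_finrank_ker
      (bearingMap (id : Fin n × Fin n → Fin n × Fin n) p)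
    exact Submodule.eq_of_le_of_finrank_eq hle (by omega)
end

section
/- A framework G(p) in ℝ^d (with all points pairwise distinct) is bearing rigid if and only if it is globally bearing rigid. In particular, local rigidity (the existence of some ε > 0 such that every bearing-equivalent framework within distance ε is bearing congruent) already implies the global statement. -/
theorem projL_self {d : ℕ} (x : EuclideanSpace ℝ (Fin d)) : projL x x = 0 := by
  by_cases hx : x = 0
  · simp [hx]
  · have hx' : ‖x‖ ^ 2 ≠ 0 := by simpa using hx
    simp only [projL, LinearMap.sub_apply, LinearMap.id_apply, LinearMap.smul_apply,
      LinearMap.comp_apply, LinearMap.toSpanSingleton_apply, ContinuousLinearMap.coe_coe,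
      innerSL_apply_apply, real_inner_self_eq_norm_sq, smul_smul]
    rw [inv_mul_cancel₀ hx', one_smul, sub_self]

/-- A framework `G(p)` (pairwise distinct points) is bearing rigid (local
`ε`-version) iff it is globally bearing rigid. -/
theorem bearing_rigid_iff_globally_bearing_rigid {d n m : ℕ} (hd : 2 ≤ d) (hn : 2 ≤ n)
    (E : Fin m → Fin n × Fin n) (hE : ∀ k, (E k).1 ≠ (E k).2)
    (p : Fin n → EuclideanSpace ℝ (Fin d))
    (hp : ∀ i j : Fin n, i ≠ j → p i ≠ p j) :
    (∃ ε > (0 : ℝ), ∀ p' : Fin n → EuclideanSpace ℝ (Fin d),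
        Real.sqrt (∑ i, ‖p' i - p i‖ ^ 2) < ε →
        (∀ k, projL (p (E k).2 - p (E k).1) (p' (E k).2 - p' (E k).1) = 0) →
        ∀ i j : Fin n, i ≠ j → projL (p i - p j) (p' i - p' j) = 0) ↔
    (∀ p' : Fin n → EuclideanSpace ℝ (Fin d),
        (∀ k, projL (p (E k).2 - p (E k).1) (p' (E k).2 - p' (E k).1) = 0) →
        ∀ i j : Fin n, i ≠ j → projL (p i - p j) (p' i - p' j) = 0) := by
  constructor
  · rintro ⟨ε, hε, h⟩ p' hp' i j hij
    set S : ℝ := Real.sqrt (∑ i, ‖p' i‖ ^ 2) with hS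
    have hS0 : 0 ≤ S := Real.sqrt_nonneg _
    set t : ℝ := ε / (S + 1) with ht
    have ht0 : 0 < t := by positivity
    have key : ∀ a b : Fin n, projL (p a - p b) ((p a + t • p' a) - (p b + t • p' b))
        = t • projL (p a - p b) (p' a - p' b) := by
      intro a b
      have e : (p a + t • p' a) - (p b + t • p' b) = (p a - p b) + t • (p' a - p' b) := by
        module
      rw [e, map_add, map_smul, projL_self, zero_add]
    have h1 := h (fun a => p a + t • p' a) ?_ ?_ i j hij
    · rw [key] at h1
      exact (smul_eq_zero.mp h1).resolve_left ht0.ne'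
    · have e : ∑ a, ‖p a + t • p' a - p a‖ ^ 2 = t ^ 2 * ∑ a, ‖p' a‖ ^ 2 := by
        rw [Finset.mul_sum]
        refine Finset.sum_congr rfl fun a _ => ?_
        rw [add_sub_cancel_left, norm_smul, mul_pow, Real.norm_eq_abs, sq_abs]
      rw [e, Real.sqrt_mul (sq_nonneg t), Real.sqrt_sq ht0.le, ← hS, ht, div_mul_eq_mul_div,
        div_lt_iff₀ (by positivity)]
      nlinarith
    · intro k
      rw [key, hp' k, smul_zero]
  · intro h
    exact ⟨1, one_pos, fun p' _ => h p'⟩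
end

section
/- For a framework G(p) in ℝ^d, the following are equivalent: (a) G(p) is infinitesimally bearing rigid; (b) rank(R(p)) = dn − d − 1; (c) Null(R(p)) = span{1_n ⊗ I_d, p} = span{1_n ⊗ I_d, p − 1_n ⊗ p̄}, where p̄ := (1/n)Σ_{i=1}^n p_i is the centroid. -/
/-- The linear map `w ↦ 1_n ⊗ w` stacking `n` copies of `w ∈ ℝ^d`; its range is
`span{1_n ⊗ I_d}`, the space of translational motions. -/
noncomputable def constLM (d n : ℕ) :
    EuclideanSpace ℝ (Fin d) →ₗ[ℝ] (Fin n → EuclideanSpace ℝ (Fin d)) :=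
  LinearMap.pi fun _ => LinearMap.id

lemma bearing_triv_le_ker {d n m : ℕ} 
    (E : Fin m → Fin n × Fin n) (p : Fin n → EuclideanSpace ℝ (Fin d))
    (hp : ∀ k, p (E k).1 ≠ p (E k).2) :
    LinearMap.range (constLM d n) ⊔ Submodule.span ℝ {p} ≤ LinearMap.ker (bearingMap E p) := by
  refine sup_le ?_ ?_
  · rintro _ ⟨w, rfl⟩
    rw [LinearMap.mem_ker]
    ext1 k
    simp [bearingMap, constLM]
  · rw [Submodule.span_singleton_le_iff_mem, LinearMap.mem_ker]
    ext1 k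
    have h : p (E k).2 - p (E k).1 ≠ 0 := sub_ne_zero.mpr (hp k).symm
    have h2 : projL (p (E k).2 - p (E k).1) (p (E k).2 - p (E k).1) = 0 := by
      generalize p (E k).2 - p (E k).1 = x at h
      have hx : ‖x‖ ≠ 0 := norm_ne_zero_iff.mpr h
      simp only [projL, LinearMap.sub_apply, LinearMap.id_apply, LinearMap.smul_apply,
        LinearMap.comp_apply, LinearMap.toSpanSingleton_apply]
      have : (innerSL ℝ x).toLinearMap x = ‖x‖ ^ 2 := real_inner_self_eq_norm_sq x
      rw [this, smul_smul, inv_mul_cancel₀ (pow_ne_zero 2 hx), one_smul, sub_self]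
    change ‖p (E k).2 - p (E k).1‖⁻¹ • projL (p (E k).2 - p (E k).1) (p (E k).2 - p (E k).1) = 0
    rw [h2, smul_zero]

lemma finrank_range_constLM {d n : ℕ} (hn : 2 ≤ n) :
    Module.finrank ℝ (LinearMap.range (constLM d n)) = d := by
  rw [LinearMap.finrank_range_of_inj]
  · simp
  · intro a b h
    exact congrFun h ⟨0, by omega⟩

lemma triv_finrank_le {d n : ℕ} (hn : 2 ≤ n) (p : Fin n → EuclideanSpace ℝ (Fin d)) :
    Module.finrank ℝ
      (LinearMap.range (constLM d n) ⊔ Submodule.span ℝ {p} : Submodule ℝ _) ≤ d + 1 := by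
  have h1 := Submodule.finrank_add_le_finrank_add_finrank
    (LinearMap.range (constLM d n)) (Submodule.span ℝ {p})
  have h2 : Module.finrank ℝ (Submodule.span ℝ {p}) ≤ 1 := by
    simpa using finrank_span_le_card (R := ℝ) ({p} : Set (Fin n → EuclideanSpace ℝ (Fin d)))
  rw [finrank_range_constLM hn] at h1
  omega

lemma triv_finrank_eq {d n : ℕ} (hn : 2 ≤ n) (p : Fin n → EuclideanSpace ℝ (Fin d))
    (i j : Fin n) (hij : p i ≠ p j) :
    Module.finrank ℝ
      (LinearMap.range (constLM d n) ⊔ Submodule.span ℝ {p} : Submodule ℝ _) = d + 1 := by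
  have hnot : p ∉ LinearMap.range (constLM d n) := by
    rintro ⟨w, rfl⟩
    exact hij rfl
  have hp0 : p ≠ 0 := by
    rintro rfl
    exact hij rfl
  have hdis : Disjoint (LinearMap.range (constLM d n)) (Submodule.span ℝ {p}) :=
    (Submodule.disjoint_span_singleton' hp0).mpr hnot
  have h1 := Submodule.finrank_sup_add_finrank_inf_eq
    (LinearMap.range (constLM d n)) (Submodule.span ℝ {p})
  rw [hdis.eq_bot, finrank_bot, finrank_range_constLM hn, finrank_span_singleton hp0] at h1
  simpa using h1

lemma triv_centroid {d n : ℕ} (p : Fin n → EuclideanSpace ℝ (Fin d))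
    (w : EuclideanSpace ℝ (Fin d)) :
    LinearMap.range (constLM d n) ⊔ Submodule.span ℝ {p} =
      LinearMap.range (constLM d n) ⊔ Submodule.span ℝ {p - constLM d n w} := by
  have hw : constLM d n w ∈ LinearMap.range (constLM d n) := ⟨w, rfl⟩
  apply le_antisymm
  · refine sup_le le_sup_left ?_
    rw [Submodule.span_singleton_le_iff_mem]
    have := Submodule.add_mem _
      (Submodule.mem_sup_right (S := LinearMap.range (constLM d n))
        (Submodule.mem_span_singleton_self (R := ℝ) (p - constLM d n w)))
      (Submodule.mem_sup_left hw)
    simpa using this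
  · refine sup_le le_sup_left ?_
    rw [Submodule.span_singleton_le_iff_mem]
    exact Submodule.sub_mem _
      (Submodule.mem_sup_right (Submodule.mem_span_singleton_self p))
      (Submodule.mem_sup_left hw)

/-- For a framework `G(p)` in `ℝ^d` the following are equivalent:
(a) `G(p)` is infinitesimally bearing rigid (every infinitesimal bearing motion is trivial);
(b) `rank R(p) = dn - d - 1`;
(c) `Null(R(p)) = span{1_n ⊗ I_d, p} = span{1_n ⊗ I_d, p - 1_n ⊗ p̄}`. -/
theorem infinitesimally_bearing_rigid_tfae {d n m : ℕ} (hd : 2 ≤ d) (hn : 2 ≤ n)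
    (E : Fin m → Fin n × Fin n) (p : Fin n → EuclideanSpace ℝ (Fin d))
    (hp : ∀ k, p (E k).1 ≠ p (E k).2) :
    ((LinearMap.ker (bearingMap E p) ≤
        LinearMap.range (constLM d n) ⊔ Submodule.span ℝ {p}) ↔
      Module.finrank ℝ (LinearMap.range (bearingMap E p)) = d * n - d - 1) ∧
    (Module.finrank ℝ (LinearMap.range (bearingMap E p)) = d * n - d - 1 ↔
      (LinearMap.ker (bearingMap E p) =
          LinearMap.range (constLM d n) ⊔ Submodule.span ℝ {p} ∧
        LinearMap.ker (bearingMap E p) =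
          LinearMap.range (constLM d n) ⊔
            Submodule.span ℝ {p - constLM d n ((n : ℝ)⁻¹ • ∑ i, p i)})) := by
  have hle := bearing_triv_le_ker E p hp
  have hrn := LinearMap.finrank_range_add_finrank_ker (bearingMap E p)
  have htot : Module.finrank ℝ (Fin n → EuclideanSpace ℝ (Fin d)) = d * n := by
    rw [Module.finrank_pi_fintype]
    simp [mul_comm]
  rw [htot] at hrn
  have hdn : d * 2 ≤ d * n := Nat.mul_le_mul_left d hn
  have hub := triv_finrank_le hn p
  have hab : (LinearMap.ker (bearingMap E p) ≤
        LinearMap.range (constLM d n) ⊔ Submodule.span ℝ {p}) →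
      Module.finrank ℝ (LinearMap.range (bearingMap E p)) = d * n - d - 1 := by
    intro h
    have heq := le_antisymm h hle
    rw [heq] at hrn
    rcases Nat.eq_zero_or_pos m with rfl | hm
    · have h0 : Module.finrank ℝ (LinearMap.range (bearingMap E p)) ≤ 0 := by
        refine (Submodule.finrank_le _).trans ?_
        exact Module.finrank_zero_of_subsingleton.le
      omega
    · have := triv_finrank_eq hn p _ _ (hp ⟨0, hm⟩)
      omega
  have hbc : Module.finrank ℝ (LinearMap.range (bearingMap E p)) = d * n - d - 1 →
      LinearMap.ker (bearingMap E p) =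
          LinearMap.range (constLM d n) ⊔ Submodule.span ℝ {p} := by
    intro h
    rcases Nat.eq_zero_or_pos m with rfl | hm
    · have h0 : Module.finrank ℝ (LinearMap.range (bearingMap E p)) ≤ 0 := by
        refine (Submodule.finrank_le _).trans ?_
        exact Module.finrank_zero_of_subsingleton.le
      omega
    · have := triv_finrank_eq hn p _ _ (hp ⟨0, hm⟩)
      exact (Submodule.eq_of_le_of_finrank_eq hle (by omega)).symm
  refine ⟨⟨hab, fun h => (hbc h).le⟩, fun h => ⟨hbc h, ?_⟩, fun h => hab h.1.le⟩
  rw [← triv_centroid]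
  exact hbc h
end

section
/- If a framework G(p) in ℝ^d (with all points pairwise distinct) is infinitesimally bearing rigid, then it is globally bearing rigid. -/
/-- An infinitesimally bearing rigid framework (pairwise distinct points)
is globally bearing rigid. -/
theorem infinitesimally_rigid_implies_globally_rigid {d n m : ℕ} (hd : 2 ≤ d) (hn : 2 ≤ n)
    (E : Fin m → Fin n × Fin n) (hE : ∀ k, (E k).1 ≠ (E k).2)
    (p : Fin n → EuclideanSpace ℝ (Fin d))
    (hp : ∀ i j : Fin n, i ≠ j → p i ≠ p j)
    (hibr : LinearMap.ker (bearingMap E p) =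
      LinearMap.range (constLM d n) ⊔ Submodule.span ℝ {p}) :
    ∀ p' : Fin n → EuclideanSpace ℝ (Fin d),
      (∀ k, projL (p (E k).2 - p (E k).1) (p' (E k).2 - p' (E k).1) = 0) →
      ∀ i j : Fin n, i ≠ j → projL (p i - p j) (p' i - p' j) = 0 := by
  intro p' h i j hij
  have hmem : p' ∈ LinearMap.ker (bearingMap E p) := by
    rw [LinearMap.mem_ker]
    funext k
    have hk := h k
    simp only [bearingMap, LinearMap.pi_apply, LinearMap.comp_apply, LinearMap.smul_apply,
      LinearMap.sub_apply, LinearMap.proj_apply, Pi.zero_apply]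
    rw [hk, smul_zero]
  rw [hibr, Submodule.mem_sup] at hmem
  obtain ⟨y, ⟨w, rfl⟩, z, hz, hyz⟩ := hmem
  obtain ⟨c, rfl⟩ := Submodule.mem_span_singleton.mp hz
  have hdiff : p' i - p' j = c • (p i - p j) := by
    rw [← hyz]
    simp [constLM, smul_sub]
  have hne : ‖p i - p j‖ ^ 2 ≠ 0 :=
    pow_ne_zero 2 (norm_ne_zero_iff.mpr (sub_ne_zero.mpr (hp i j hij)))
  have hself : projL (p i - p j) (p i - p j) = 0 := by
    generalize p i - p j = x at hne
    simp only [projL, LinearMap.sub_apply, LinearMap.id_apply, LinearMap.smul_apply,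
      LinearMap.comp_apply, LinearMap.toSpanSingleton_apply, ContinuousLinearMap.coe_coe,
      innerSL_apply_apply, real_inner_self_eq_norm_sq]
    rw [smul_smul, inv_mul_cancel₀ hne, one_smul, sub_self]
  rw [hdiff, map_smul, hself, smul_zero]
end

section
/- Let G(p) be a framework in ℝ^d and let G(p̃) be the framework in ℝ^{d̃} (d̃ > d) obtained by appending zeros: p̃_i := (p_i^T, 0^T)^T ∈ ℝ^{d̃} for every i ∈ V. Then rank(R(p̃)) = rank(R(p)) + (d̃ − d)(n − 1); consequently, G(p̃) is infinitesimally bearing rigid in ℝ^{d̃} if and only if G(p) is infinitesimally bearing rigid in ℝ^d (infinitesimal bearing rigidity is invariant to the space dimension). -/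
theorem projL_eq_zero_iff {d : ℕ} (x y : EuclideanSpace ℝ (Fin d)) (hx : x ≠ 0) :
    projL x y = 0 ↔ ∃ c : ℝ, y = c • x := by
  have hy : projL x y = y - (‖x‖ ^ 2)⁻¹ • (inner ℝ x y • x) := by
    simp [projL]
  rw [hy]
  constructor
  · intro h
    exact ⟨(‖x‖ ^ 2)⁻¹ * inner ℝ x y, by rw [mul_smul]; exact sub_eq_zero.mp h⟩
  · rintro ⟨c, rfl⟩
    have hx2 : ‖x‖ ^ 2 ≠ 0 := by simpa using hx
    rw [inner_smul_right, real_inner_self_eq_norm_sq, smul_smul, sub_eq_zero]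
    congr 1
    field_simp

theorem mem_ker_bearing {d n : ℕ} {ι : Type*} (E : ι → Fin n × Fin n)
    (p : Fin n → EuclideanSpace ℝ (Fin d)) (hp : ∀ k, p (E k).1 ≠ p (E k).2)
    (v : Fin n → EuclideanSpace ℝ (Fin d)) :
    v ∈ LinearMap.ker (bearingMap E p) ↔
      ∀ k, ∃ c : ℝ, ∀ j, v (E k).2 j - v (E k).1 j = c * (p (E k).2 j - p (E k).1 j) := by
  rw [LinearMap.mem_ker, funext_iff]
  refine forall_congr' fun k => ?_
  have hne : p (E k).2 - p (E k).1 ≠ 0 := sub_ne_zero.mpr (hp k).symm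
  have h1 : bearingMap E p v k = ‖p (E k).2 - p (E k).1‖⁻¹ •
      projL (p (E k).2 - p (E k).1) (v (E k).2 - v (E k).1) := by
    simp [bearingMap]
  rw [h1, Pi.zero_apply, smul_eq_zero_iff_right (inv_ne_zero (norm_ne_zero_iff.mpr hne)),
    projL_eq_zero_iff _ _ hne]
  refine exists_congr fun c => ?_
  rw [PiLp.ext_iff]
  simp

/-- Append constant coordinates. -/
noncomputable def appendMap (d r n : ℕ) :
    ((Fin n → EuclideanSpace ℝ (Fin d)) × (Fin r → ℝ)) →ₗ[ℝ]
      (Fin n → EuclideanSpace ℝ (Fin (d + r))) where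
  toFun x i := WithLp.toLp 2 (Fin.append (fun j => x.1 i j) x.2)
  map_add' x y := by
    ext i j
    refine Fin.addCases (fun j => ?_) (fun j => ?_) j <;> simp
  map_smul' c x := by
    ext i j
    refine Fin.addCases (fun j => ?_) (fun j => ?_) j <;> simp

theorem finrank_ker_lift {d r n m : ℕ} (hn : 2 ≤ n)
    (E : Fin m → Fin n × Fin n) (p : Fin n → EuclideanSpace ℝ (Fin d))
    (hp : ∀ k, p (E k).1 ≠ p (E k).2)
    (hconn : (SimpleGraph.fromRel fun i j : Fin n => ∃ k, E k = (i, j)).Connected)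
    (q : Fin n → EuclideanSpace ℝ (Fin (d + r)))
    (hq1 : ∀ i j, q i (Fin.castAdd r j) = p i j)
    (hq2 : ∀ i j, q i (Fin.natAdd d j) = 0) :
    Module.finrank ℝ (LinearMap.ker (bearingMap E q)) =
      Module.finrank ℝ (LinearMap.ker (bearingMap E p)) + r := by
  have hq : ∀ k, q (E k).1 ≠ q (E k).2 := by
    intro k h
    apply hp k
    ext j
    rw [← hq1, ← hq1, h]
  let f : (LinearMap.ker (bearingMap E p) × (Fin r → ℝ)) →ₗ[ℝ]
      (Fin n → EuclideanSpace ℝ (Fin (d + r))) :=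
    appendMap d r n ∘ₗ ((LinearMap.ker (bearingMap E p)).subtype.prodMap LinearMap.id)
  have f1 : ∀ x i j, f x i (Fin.castAdd r j) = x.1.1 i j := by
    intro x i j; simp [f, appendMap]
  have f2 : ∀ x i j, f x i (Fin.natAdd d j) = x.2 j := by
    intro x i j; simp [f, appendMap]
  have i0 : Fin n := ⟨0, by omega⟩
  have finj : Function.Injective f := by
    intro x y h
    apply Prod.ext
    · apply Subtype.ext
      ext i j
      rw [← f1, ← f1, h]
    · ext j
      rw [← f2 x i0, ← f2 y i0, h]
  have frange : LinearMap.range f = LinearMap.ker (bearingMap E q) := by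
    ext w
    rw [mem_ker_bearing E q hq]
    constructor
    · rintro ⟨x, rfl⟩ k
      obtain ⟨c, hc⟩ := (mem_ker_bearing E p hp _).mp x.1.2 k
      refine ⟨c, fun j => ?_⟩
      refine Fin.addCases (fun j => ?_) (fun j => ?_) j
      · simp only [f1, hq1]; exact hc j
      · simp [f2, hq2]
    · intro h
      have hconst : ∀ i j, w i (Fin.natAdd d j) = w i0 (Fin.natAdd d j) := by
        intro i j
        have hedge : ∀ k, w (E k).2 (Fin.natAdd d j) = w (E k).1 (Fin.natAdd d j) := by
          intro k
          obtain ⟨c, hc⟩ := h k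
          have := hc (Fin.natAdd d j)
          simp only [hq2, sub_self, mul_zero] at this
          linarith
        obtain ⟨W⟩ := hconn.preconnected i i0
        induction W with
        | nil => rfl
        | cons hadj _ ih =>
          rw [← ih]
          rw [SimpleGraph.fromRel_adj] at hadj
          rcases hadj.2 with ⟨k, hk⟩ | ⟨k, hk⟩
          · have := hedge k
            rw [hk] at this
            exact this.symm
          · have := hedge k
            rw [hk] at this
            exact this
      refine ⟨⟨⟨fun i => WithLp.toLp 2 (fun j => w i (Fin.castAdd r j)), ?_⟩,
        fun j => w i0 (Fin.natAdd d j)⟩, ?_⟩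
      · rw [mem_ker_bearing E p hp]
        intro k
        obtain ⟨c, hc⟩ := h k
        refine ⟨c, fun j => ?_⟩
        have := hc (Fin.castAdd r j)
        simpa only [hq1] using this
      · ext i j
        refine Fin.addCases (fun j => ?_) (fun j => ?_) j
        · rw [f1]
        · rw [f2]; exact (hconst i j).symm
  rw [← frange, LinearMap.finrank_range_of_inj finj, Module.finrank_prod]
  simp

/-- Lifting a framework from `ℝ^d` to `ℝ^{d̃}` (`d̃ > d`) by appending zeros
gives `rank R(p̃) = rank R(p) + (d̃ - d)(n - 1)`; hence `G(p̃)` is infinitesimally bearing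
rigid in `ℝ^{d̃}` iff `G(p)` is infinitesimally bearing rigid in `ℝ^d`. -/
theorem rank_lift_dimension {d d' n m : ℕ} (hd : 2 ≤ d) (hdd : d < d') (hn : 2 ≤ n)
    (E : Fin m → Fin n × Fin n) (p : Fin n → EuclideanSpace ℝ (Fin d))
    (hp : ∀ k, p (E k).1 ≠ p (E k).2)
    (hconn : (SimpleGraph.fromRel fun i j : Fin n => ∃ k, E k = (i, j)).Connected)
    (ptilde : Fin n → EuclideanSpace ℝ (Fin d'))
    (hlift : ∀ i : Fin n, ∀ j : Fin d',
      ptilde i j = if h : (j : ℕ) < d then p i ⟨(j : ℕ), h⟩ else 0) :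
    Module.finrank ℝ (LinearMap.range (bearingMap E ptilde)) =
      Module.finrank ℝ (LinearMap.range (bearingMap E p)) + (d' - d) * (n - 1) ∧
    (Module.finrank ℝ (LinearMap.range (bearingMap E ptilde)) = d' * n - d' - 1 ↔
      Module.finrank ℝ (LinearMap.range (bearingMap E p)) = d * n - d - 1) := by
  obtain ⟨r, rfl⟩ := Nat.exists_eq_add_of_le hdd.le
  have hk := finrank_ker_lift hn E p hp hconn ptilde
    (fun i j => by simp [hlift]) (fun i j => by simp [hlift])
  have h1 := LinearMap.finrank_range_add_finrank_ker (bearingMap E p)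
  have h2 := LinearMap.finrank_range_add_finrank_ker (bearingMap E ptilde)
  simp only [Module.finrank_pi_fintype, finrank_euclideanSpace, Fintype.card_fin,
    Finset.sum_const, Finset.card_univ, smul_eq_mul] at h1 h2
  obtain ⟨a, rfl⟩ := Nat.exists_eq_add_of_le hn
  have e1 : 2 + a - 1 = 1 + a := by omega
  have e2 : d + r - d = r := by omega
  have e3 : (d + r) * (2 + a) - (d + r) - 1 = (d * (1 + a) - 1) + r * (1 + a) := by
    have : (d + r) * (2 + a) = (d * (1 + a) + r * (1 + a)) + (d + r) := by ring
    have h5 : 1 ≤ d * (1 + a) := Nat.mul_pos (by omega) (by omega)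
    omega
  have e4 : d * (2 + a) - d - 1 = d * (1 + a) - 1 := by
    have : d * (2 + a) = d * (1 + a) + d := by ring
    omega
  have e5 : (2 + a) * (d + r) = (2 + a) * d + r * (1 + a) + r := by ring
  rw [e1, e2, e3, e4]
  constructor
  · omega
  · constructor <;> intro h <;> omega
end

section
/- For any framework G(p) in ℝ², the bearing rigidity matrix and the distance rigidity matrix satisfy R(p) = diag(g_1^⊥/‖e_1‖², …, g_m^⊥/‖e_m‖²) · R_D(p) · (I_n ⊗ Q_{π/2}^T), where Q_{π/2} is the rotation of ℝ² by π/2 and g_k^⊥ := Q_{π/2} g_k; consequently rank(R(p)) = rank(R_D(p)). -/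
/-- The distance rigidity matrix `R_D(p) = diag(e_kᵀ)(H ⊗ I_d)`: its `k`-th row sends
`δ` to `⟪e_k, δ_{(E k).2} - δ_{(E k).1}⟫`. -/
noncomputable def distanceMap {d n : ℕ} {ι : Type*} (E : ι → Fin n × Fin n)
    (p : Fin n → EuclideanSpace ℝ (Fin d)) :
    (Fin n → EuclideanSpace ℝ (Fin d)) →ₗ[ℝ] (ι → ℝ) :=
  LinearMap.pi fun k =>
    (innerSL ℝ (p (E k).2 - p (E k).1)).toLinearMap ∘ₗ
      ((LinearMap.proj (R := ℝ) (φ := fun _ : Fin n => EuclideanSpace ℝ (Fin d)) (E k).2) -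
       (LinearMap.proj (R := ℝ) (φ := fun _ : Fin n => EuclideanSpace ℝ (Fin d)) (E k).1))

/-- `Q_{π/2}`: counterclockwise rotation of ℝ² by `π/2`, `(x₀, x₁) ↦ (-x₁, x₀)`. -/
noncomputable def rotL : EuclideanSpace ℝ (Fin 2) →ₗ[ℝ] EuclideanSpace ℝ (Fin 2) :=
  Matrix.toEuclideanLin (!![0, -1; 1, 0] : Matrix (Fin 2) (Fin 2) ℝ)

/-- `Q_{π/2}ᵀ`: clockwise rotation of ℝ² by `π/2`, `(x₀, x₁) ↦ (x₁, -x₀)`. -/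
noncomputable def rotLT : EuclideanSpace ℝ (Fin 2) →ₗ[ℝ] EuclideanSpace ℝ (Fin 2) :=
  Matrix.toEuclideanLin (!![0, 1; -1, 0] : Matrix (Fin 2) (Fin 2) ℝ)

theorem rotL_rotLT_aux (x : EuclideanSpace ℝ (Fin 2)) : rotLT (rotL x) = x := by
  ext i
  fin_cases i <;> simp [rotL, rotLT, Matrix.toLpLin_apply, Matrix.mulVec, dotProduct, Fin.sum_univ_two]

theorem projL_aux (e v : EuclideanSpace ℝ (Fin 2)) (he : e ≠ 0) :
    projL e v = ((‖e‖ ^ 2)⁻¹ * inner ℝ e (rotLT v)) • rotL e := by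
  have h0 : ‖e‖ ^ 2 ≠ 0 := pow_ne_zero 2 (norm_ne_zero_iff.mpr he)
  have h1 : ‖e‖ ^ 2 = e 0 ^ 2 + e 1 ^ 2 := by
    simp [EuclideanSpace.norm_sq_eq, Fin.sum_univ_two]
  rw [h1] at h0
  ext i
  fin_cases i
  · simp [projL, h1, rotL, rotLT, Matrix.toLpLin_apply, Matrix.mulVec, dotProduct,
      Fin.sum_univ_two, PiLp.inner_apply]
    field_simp
    ring
  · simp [projL, h1, rotL, rotLT, Matrix.toLpLin_apply, Matrix.mulVec, dotProduct,
      Fin.sum_univ_two, PiLp.inner_apply]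
    field_simp
    ring

/-- For a framework in ℝ²,
`R(p) = diag(g_k^⊥/‖e_k‖²) R_D(p) (I_n ⊗ Q_{π/2}ᵀ)` (rowwise identity below), and
consequently `rank R(p) = rank R_D(p)`. -/
theorem bearing_eq_distance_rigidity_factorization {n m : ℕ} (hn : 2 ≤ n)
    (E : Fin m → Fin n × Fin n) (p : Fin n → EuclideanSpace ℝ (Fin 2))
    (hp : ∀ k, p (E k).1 ≠ p (E k).2) :
    (∀ δ : Fin n → EuclideanSpace ℝ (Fin 2), ∀ k : Fin m,
      bearingMap E p δ k =
        ((‖p (E k).2 - p (E k).1‖ ^ 2)⁻¹ * distanceMap E p (fun i => rotLT (δ i)) k) •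
          rotL (‖p (E k).2 - p (E k).1‖⁻¹ • (p (E k).2 - p (E k).1))) ∧
    Module.finrank ℝ (LinearMap.range (bearingMap E p)) =
      Module.finrank ℝ (LinearMap.range (distanceMap E p)) := by
  have he : ∀ k, p (E k).2 - p (E k).1 ≠ 0 := fun k => sub_ne_zero.mpr (hp k).symm
  have key : ∀ δ : Fin n → EuclideanSpace ℝ (Fin 2), ∀ k : Fin m,
      bearingMap E p δ k =
        ((‖p (E k).2 - p (E k).1‖ ^ 2)⁻¹ * distanceMap E p (fun i => rotLT (δ i)) k) •
          rotL (‖p (E k).2 - p (E k).1‖⁻¹ • (p (E k).2 - p (E k).1)) := by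
    intro δ k
    have h1 : bearingMap E p δ k = ‖p (E k).2 - p (E k).1‖⁻¹ •
        projL (p (E k).2 - p (E k).1) (δ (E k).2 - δ (E k).1) := rfl
    have h2 : distanceMap E p (fun i => rotLT (δ i)) k =
        inner ℝ (p (E k).2 - p (E k).1) (rotLT (δ (E k).2) - rotLT (δ (E k).1)) := rfl
    rw [h1, h2, projL_aux _ _ (he k), map_sub, map_smul, smul_comm]
  refine ⟨key, ?_⟩
  let c : Fin m → EuclideanSpace ℝ (Fin 2) := fun k => (‖p (E k).2 - p (E k).1‖ ^ 2)⁻¹ •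
    rotL (‖p (E k).2 - p (E k).1‖⁻¹ • (p (E k).2 - p (E k).1))
  have hc : ∀ k, c k ≠ 0 := by
    intro k h
    have hn := norm_ne_zero_iff.mpr (he k)
    have h3 := (smul_eq_zero.mp h).resolve_left (inv_ne_zero (pow_ne_zero 2 hn))
    have h4 := congrArg rotLT h3
    rw [rotL_rotLT_aux, map_zero] at h4
    exact he k ((smul_eq_zero.mp h4).resolve_left (inv_ne_zero hn))
  let D : (Fin m → ℝ) →ₗ[ℝ] (Fin m → EuclideanSpace ℝ (Fin 2)) :=
    LinearMap.pi fun k => LinearMap.toSpanSingleton ℝ _ (c k) ∘ₗ LinearMap.proj k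
  have hD : Function.Injective D := by
    intro x y hxy
    funext k
    have h : x k • c k = y k • c k := congrFun hxy k
    exact smul_left_injective ℝ (hc k) h
  have hr : LinearMap.range (bearingMap E p) =
      (LinearMap.range (distanceMap E p)).map D := by
    have hk : ∀ δ, bearingMap E p δ = D (distanceMap E p (fun i => rotLT (δ i))) := by
      intro δ
      funext k
      rw [key]
      change _ = (distanceMap E p (fun i => rotLT (δ i)) k) • c k
      rw [smul_smul, mul_comm]
    ext y
    constructor
    · rintro ⟨δ, rfl⟩
      exact ⟨_, ⟨_, rfl⟩, (hk δ).symm⟩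
    · rintro ⟨_, ⟨δ, rfl⟩, rfl⟩
      refine ⟨fun i => rotL (δ i), ?_⟩
      rw [hk]
      simp only [rotL_rotLT_aux]
  rw [hr]
  exact ((Submodule.equivMapOfInjective D hD _).finrank_eq).symm
end

section
/- Let G(p) be a framework in ℝ². A vector δp = (δp_1^T, …, δp_n^T)^T ∈ ℝ^{2n} satisfies R(p)δp = 0 (i.e., δp is an infinitesimal bearing motion of G(p)) if and only if δp^⊥ := ((Q_{π/2}δp_1)^T, …, (Q_{π/2}δp_n)^T)^T satisfies R_D(p)δp^⊥ = 0 (i.e., δp^⊥ is an infinitesimal distance motion of G(p)), where Q_{π/2} is the rotation of ℝ² by π/2. -/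
/-- In the plane, `P_x y = 0` iff `x` is orthogonal to `Q_{π/2} y`. -/
theorem projL_eq_zero_iff_inner_rotL (x y : EuclideanSpace ℝ (Fin 2)) (hx : x ≠ 0) :
    projL x y = 0 ↔ inner ℝ x (rotL y) = 0 := by
  have hN : ‖x‖ ^ 2 ≠ 0 := pow_ne_zero 2 (norm_ne_zero_iff.mpr hx)
  have hN2 : ‖x‖ ^ 2 = x 0 ^ 2 + x 1 ^ 2 := by
    simp [EuclideanSpace.norm_sq_eq, Fin.sum_univ_two]
  have h1 : inner ℝ x (rotL y) = x 1 * y 0 - x 0 * y 1 := by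
    simp [rotL, PiLp.inner_apply, Fin.sum_univ_two, Matrix.toLpLin_apply, Matrix.mulVec,
      dotProduct]
    ring
  have h2 : inner ℝ x y = x 0 * y 0 + x 1 * y 1 := by
    simp [PiLp.inner_apply, Fin.sum_univ_two]
    ring
  have h3 : projL x y = y - (‖x‖ ^ 2)⁻¹ • (inner ℝ x y • x) := by
    simp [projL]
  have h4 : ∀ i, (projL x y) i = y i - (‖x‖ ^ 2)⁻¹ * ((x 0 * y 0 + x 1 * y 1) * x i) := by
    intro i
    rw [h3, h2]
    simp
  rw [h1]
  rw [hN2] at hN h4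
  constructor
  · intro h
    have a0 := h4 0
    have a1 := h4 1
    rw [h] at a0 a1
    simp only [PiLp.zero_apply] at a0 a1
    linear_combination x 0 * a1 - x 1 * a0
  · intro h
    ext i
    rw [h4 i]
    fin_cases i
    · simp only [Fin.zero_eta, PiLp.zero_apply]
      field_simp
      linear_combination x 1 * h
    · simp only [Fin.mk_one, PiLp.zero_apply]
      field_simp
      linear_combination -x 0 * h

/-- For a framework in ℝ², `δp` is an infinitesimal bearing motion
(`R(p) δp = 0`) iff `δp^⊥ := (Q_{π/2} δp_1, …, Q_{π/2} δp_n)` is an infinitesimal distance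
motion (`R_D(p) δp^⊥ = 0`). -/
theorem bearing_motion_iff_perp_distance_motion {n m : ℕ} (hn : 2 ≤ n)
    (E : Fin m → Fin n × Fin n) (p : Fin n → EuclideanSpace ℝ (Fin 2))
    (hp : ∀ k, p (E k).1 ≠ p (E k).2)
    (δp : Fin n → EuclideanSpace ℝ (Fin 2)) :
    bearingMap E p δp = 0 ↔ distanceMap E p (fun i => rotL (δp i)) = 0 := by
  rw [funext_iff, funext_iff]
  refine forall_congr' fun k => ?_
  have hx : p (E k).2 - p (E k).1 ≠ 0 := sub_ne_zero.mpr (hp k).symm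
  have hb : bearingMap E p δp k = ‖p (E k).2 - p (E k).1‖⁻¹ •
      projL (p (E k).2 - p (E k).1) (δp (E k).2 - δp (E k).1) := rfl
  have hd : distanceMap E p (fun i => rotL (δp i)) k =
      inner ℝ (p (E k).2 - p (E k).1) (rotL (δp (E k).2) - rotL (δp (E k).1)) := rfl
  rw [hb, hd, ← map_sub, Pi.zero_apply, Pi.zero_apply,
    smul_eq_zero_iff_right (inv_ne_zero (norm_ne_zero_iff.mpr hx)),
    projL_eq_zero_iff_inner_rotL _ _ hx]
end

section
/- Let p : [0, T) → ℝ^{dn} be a differentiable solution of the bearing-only formation control law ṗ(t) = (H ⊗ I_d)^T diag(P_{g_1(t)}, …, P_{g_m(t)}) g*, where g_k(t) are the bearings of p(t) and p_i(t) ≠ p_j(t) for every edge and all t. Then the centroid p̄(t) := (1/n)Σ_{i=1}^n p_i(t) and the scale s(t) := sqrt((1/n)Σ_{i=1}^n ‖p_i(t) − p̄(t)‖²) are constant in t. -/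
/-- The bearing-only control field `(H ⊗ I_d)ᵀ diag(P_{g_1}, …, P_{g_m}) g*` evaluated at a
configuration `q`: its `i`-th component is `∑_k [H]_{ki} P_{g_k} g*_k`, where `[H]_{ki} = 1`
if `i` is the head `(E k).2` of edge `k`, `-1` if `i` is its tail `(E k).1`, and `0`
otherwise. -/
noncomputable def bearingCtrl {d n m : ℕ} (E : Fin m → Fin n × Fin n)
    (gs : Fin m → EuclideanSpace ℝ (Fin d)) (q : Fin n → EuclideanSpace ℝ (Fin d)) :
    Fin n → EuclideanSpace ℝ (Fin d) :=
  fun i => ∑ k, ((if (E k).2 = i then (1 : ℝ) else 0) - if (E k).1 = i then (1 : ℝ) else 0) •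
    projL (q (E k).2 - q (E k).1) (gs k)

lemma const_of_deriv_zero_Ico {F : Type*} [NormedAddCommGroup F] [NormedSpace ℝ F] {T : ℝ}
    {f : ℝ → F} (hf : ∀ t ∈ Set.Ico (0 : ℝ) T, HasDerivWithinAt f 0 (Set.Ico 0 T) t)
    {t : ℝ} (ht : t ∈ Set.Ico (0 : ℝ) T) : f t = f 0 := by
  have h0 : (0 : ℝ) ∈ Set.Ico (0 : ℝ) T := ⟨le_refl _, ht.1.trans_lt ht.2⟩
  have h := (convex_Ico (0 : ℝ) T).norm_image_sub_le_of_norm_hasDerivWithin_le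
    (f := f) (f' := fun _ => 0) (C := 0) hf (by simp) h0 ht
  rw [zero_mul] at h
  exact sub_eq_zero.1 (norm_le_zero_iff.1 h)

lemma inner_projL_self {d : ℕ} (x y : EuclideanSpace ℝ (Fin d)) : inner ℝ x (projL x y) = 0 := by
  by_cases hx : x = 0
  · simp [hx]
  have h : ‖x‖ ≠ 0 := norm_ne_zero_iff.2 hx
  simp [projL, inner_sub_right, inner_smul_right, real_inner_self_eq_norm_sq]
  field_simp
  ring

lemma sum_bearingCtrl {d n m : ℕ} (E : Fin m → Fin n × Fin n)
    (gs : Fin m → EuclideanSpace ℝ (Fin d)) (q : Fin n → EuclideanSpace ℝ (Fin d)) :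
    ∑ i, bearingCtrl E gs q i = 0 := by
  unfold bearingCtrl
  rw [Finset.sum_comm]
  refine Finset.sum_eq_zero fun k _ => ?_
  rw [← Finset.sum_smul]
  simp [Finset.sum_sub_distrib]

lemma sum_inner_bearingCtrl {d n m : ℕ} (E : Fin m → Fin n × Fin n)
    (gs : Fin m → EuclideanSpace ℝ (Fin d)) (q : Fin n → EuclideanSpace ℝ (Fin d))
    (c : EuclideanSpace ℝ (Fin d)) :
    ∑ i, inner ℝ (q i - c) (bearingCtrl E gs q i) = 0 := by
  unfold bearingCtrl
  simp_rw [inner_sum]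
  rw [Finset.sum_comm]
  refine Finset.sum_eq_zero fun k _ => ?_
  have h := inner_projL_self (q (E k).2 - q (E k).1) (gs k)
  rw [inner_sub_left] at h
  simp only [inner_smul_right, sub_mul, ite_mul, one_mul, zero_mul, Finset.sum_sub_distrib,
    Finset.sum_ite_eq, Finset.mem_univ, if_true, inner_sub_left]
  linarith

/-- Along any differentiable solution of
`ṗ = (H ⊗ I_d)ᵀ diag(P_{g_k(t)}) g*` on `[0, T)` with `p_i(t) ≠ p_j(t)` on every edge, the
centroid `p̄(t)` and the scale `s(t)` are constant in `t`. -/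
theorem centroid_and_scale_invariant {d n m : ℕ} (hd : 2 ≤ d) (hn : 2 ≤ n)
    (E : Fin m → Fin n × Fin n) (gs : Fin m → EuclideanSpace ℝ (Fin d))
    (T : ℝ) (hT : 0 < T) (p : ℝ → Fin n → EuclideanSpace ℝ (Fin d))
    (hderiv : ∀ t ∈ Set.Ico (0 : ℝ) T,
      HasDerivWithinAt p (bearingCtrl E gs (p t)) (Set.Ico 0 T) t)
    (hne : ∀ t ∈ Set.Ico (0 : ℝ) T, ∀ k, p t (E k).1 ≠ p t (E k).2) :
    ∀ t ∈ Set.Ico (0 : ℝ) T,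
      ((n : ℝ)⁻¹ • ∑ i, p t i) = ((n : ℝ)⁻¹ • ∑ i, p 0 i) ∧
      Real.sqrt ((n : ℝ)⁻¹ * ∑ i, ‖p t i - (n : ℝ)⁻¹ • ∑ l, p t l‖ ^ 2) =
        Real.sqrt ((n : ℝ)⁻¹ * ∑ i, ‖p 0 i - (n : ℝ)⁻¹ • ∑ l, p 0 l‖ ^ 2) := by
  intro t ht
  have hi : ∀ s ∈ Set.Ico (0 : ℝ) T, ∀ i,
      HasDerivWithinAt (fun s => p s i) (bearingCtrl E gs (p s) i) (Set.Ico 0 T) s :=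
    fun s hs => hasDerivWithinAt_pi.1 (hderiv s hs)
  have hsum : ∑ i, p t i = ∑ i, p 0 i := by
    refine const_of_deriv_zero_Ico (f := fun s => ∑ i, p s i) (fun s hs => ?_) ht
    have h := HasDerivWithinAt.fun_sum (u := Finset.univ) (fun i _ => hi s hs i)
    rwa [sum_bearingCtrl] at h
  refine ⟨by rw [hsum], ?_⟩
  rw [hsum]
  generalize (n : ℝ)⁻¹ • ∑ l, p 0 l = c
  have key : ∑ i, ‖p t i - c‖ ^ 2 = ∑ i, ‖p 0 i - c‖ ^ 2 := by
    refine const_of_deriv_zero_Ico (f := fun s => ∑ i, ‖p s i - c‖ ^ 2) (fun s hs => ?_) ht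
    have h := HasDerivWithinAt.fun_sum (u := Finset.univ)
      (fun i _ => ((hi s hs i).sub_const c).norm_sq)
    rwa [← Finset.mul_sum, sum_inner_bearingCtrl, mul_zero] at h
  rw [key]
end
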